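/- In the Basilica group the commutator of a with b² is a pair with trivial first coordinate: as permutations of List Bool, a⁻¹ * b⁻¹ * b⁻¹ * a * b * b = pair 1 (b⁻¹ * a⁻¹ * b * a). -/

import Mathlib

namespace Basilica

mutual
  /-- Underlying map of the Basilica generator `a`. -/
  def aF : List Bool → List Bool
    | [] => []
    | false :: w => false :: w
    | true :: w => true :: bF w
  /-- Underlying map of the Basilica generator `b`. -/
  def bF : List Bool → List Bool
    | [] => []
    | false :: w => true :: w
    | true :: w => false :: aF w
end

mutual
  /-- Inverse of `aF`. -/
  def aI : List Bool → List Bool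
    | [] => []
    | false :: w => false :: w
    | true :: w => true :: bI w
  /-- Inverse of `bF`. -/
  def bI : List Bool → List Bool
    | [] => []
    | false :: w => true :: aI w
    | true :: w => false :: w
end

theorem basilica_inv : ∀ w : List Bool,
    aI (aF w) = w ∧ bI (bF w) = w ∧ aF (aI w) = w ∧ bF (bI w) = w := by
  intro w
  induction w with
  | nil => simp [aF, bF, aI, bI]
  | cons x w ih =>
    cases x <;>
      simp [aF, bF, aI, bI, ih.1, ih.2.1, ih.2.2.1, ih.2.2.2]

/-- The Basilica generator `a` as a permutation of the binary tree `List Bool`: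
`a [] = []`, `a (false :: w) = false :: w`, `a (true :: w) = true :: b w`. -/
def a : Equiv.Perm (List Bool) :=
  ⟨aF, aI, fun w => (basilica_inv w).1, fun w => (basilica_inv w).2.2.1⟩

/-- The Basilica generator `b` as a permutation of the binary tree `List Bool`:
`b [] = []`, `b (false :: w) = true :: w`, `b (true :: w) = false :: a w`. -/
def b : Equiv.Perm (List Bool) :=
  ⟨bF, bI, fun w => (basilica_inv w).2.1, fun w => (basilica_inv w).2.2.2⟩

/-- Underlying map of the pair `(g, h)` acting on the two subtrees. -/
def pairF (g h : List Bool → List Bool) : List Bool → List Bool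
  | [] => []
  | false :: w => false :: g w
  | true :: w => true :: h w

/-- The permutation of `List Bool` acting as `g` on the subtree below `false`
and as `h` on the subtree below `true`, fixing the root. -/
def pair (g h : Equiv.Perm (List Bool)) : Equiv.Perm (List Bool) :=
  ⟨pairF g h, pairF g.symm h.symm,
    fun w => by cases w with
      | nil => rfl
      | cons x w => cases x <;> simp [pairF],
    fun w => by cases w with
      | nil => rfl
      | cons x w => cases x <;> simp [pairF]⟩

/-- The Basilica group: the subgroup of `Equiv.Perm (List Bool)` generated by `a` and `b`. -/
def B : Subgroup (Equiv.Perm (List Bool)) := Subgroup.closure {a, b}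

end Basilica

open Basilica in
/-- The commutator of `a` with `b²` is a pair with trivial first coordinate:
`[a, b²] = (1, [b, a])`. -/
theorem basilica_commutator_a_bsq :
    a⁻¹ * b⁻¹ * b⁻¹ * a * b * b = pair 1 (b⁻¹ * a⁻¹ * b * a) := by
  ext1 w
  -- The underlying maps of `a⁻¹` and `b⁻¹` unfold definitionally to `aI`, `bI`.
  change aI (bI (bI (aF (bF (bF w))))) = pairF id (fun v => bI (aI (bF (aF v)))) w
  rcases w with _ | ⟨_ | _, w⟩
  · simp [aF, bF, aI, bI, pairF]
  -- `b²` acts as `a` below `false`, where `a` acts trivially, so everything cancels.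
  · simp [aF, bF, aI, bI, pairF, (basilica_inv w).1]
  -- Below `true`, `b²` acts as `a` and `a` acts as `b`, which leaves `b⁻¹ a⁻¹ b a`.
  · simp [aF, bF, aI, bI, pairF]
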